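/- arXiv:2108.11313 — 4 statements merged into one kernel-verified Lean document; each statement's English description precedes it below -/
import Mathlib

section
/- Every symmetric cyclic Abelian class over a finite ordered alphabet contains at least one singular cyclic word, i.e., for every Parikh vector there exists a cyclic word ω with that Parikh vector such that every factorization ω = uv into nonempty non-palindromes is synchronizing. -/
/-- The lexicographic order on words induced by the order of the alphabet, with the
convention that `u ≺ v` whenever `v` is a proper prefix of `u`. -/
def wlt {A : Type*} [LinearOrder A] (u v : List A) : Prop :=
  (v ≠ u ∧ v <+: u) ∨
    ∃ (p s t : List A) (x y : A), x < y ∧ u = p ++ x :: s ∧ v = p ++ y :: t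

/-- The alternating lexicographic order on words: at the first difference, the order of
letters is used at even (0-based) positions and reversed at odd positions; if `v` is a
proper prefix of `u` then `u ≺_alt v` when `|v|` is even and `v ≺_alt u` when `|v|` is odd. -/
def altlt {A : Type*} [LinearOrder A] (u v : List A) : Prop :=
  (v ≠ u ∧ v <+: u ∧ Even v.length) ∨ (u ≠ v ∧ u <+: v ∧ Odd u.length) ∨
    ∃ (p s t : List A) (x y : A), u = p ++ x :: s ∧ v = p ++ y :: t ∧
      ((Even p.length ∧ x < y) ∨ (Odd p.length ∧ y < x))

/-- `r` is a linear representation (rotation) of the cyclic word represented by `w`. -/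
def isRot {A : Type*} (w r : List A) : Prop := ∃ s t : List A, w = s ++ t ∧ r = t ++ s

/-- `f` is a factor of the cyclic word represented by `w`. -/
def isCFactor {A : Type*} (f w : List A) : Prop := ∃ r : List A, isRot w r ∧ f <:+: r

/-- The cyclic word represented by `w` is singular: every factorization of it into two
nonempty non-palindromes `u`, `v` is synchronizing (`u ≺ u*` iff `v ≺ v*`). -/
def cyclicSingular {A : Type*} [LinearOrder A] (w : List A) : Prop :=
  ∀ u v : List A, u ≠ [] → v ≠ [] → isRot w (u ++ v) →
    u ≠ u.reverse → v ≠ v.reverse → (wlt u u.reverse ↔ wlt v v.reverse)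

/-- `δ_b(w) = Σ_{c>b} |w|_c − Σ_{a<b} |w|_a`. -/
def deltaW {A : Type*} [LinearOrder A] [Fintype A] (w : List A) (b : A) : ℤ :=
  (∑ c ∈ Finset.univ.filter (fun c => b < c), (w.count c : ℤ)) -
    (∑ a ∈ Finset.univ.filter (fun a => a < b), (w.count a : ℤ))

/-- The symmetric matrix attached to a positive integer. -/
def symMat (r : ℤ) : Matrix (Fin 2) (Fin 2) ℤ := !![r * (r + 1), r; r, 1]

/-- The matrix of a word. -/
def wordMat {A : Type*} (f : A → ℤ) (w : List A) : Matrix (Fin 2) (Fin 2) ℤ :=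
  (w.map (fun a => symMat (f a))).prod

/-- The skew part of a matrix. -/
def skewD (M : Matrix (Fin 2) (Fin 2) ℤ) : ℤ := M 1 0 - M 0 1

theorem wordMat_append {A : Type*} (f : A → ℤ) (u v : List A) :
    wordMat f (u ++ v) = wordMat f u * wordMat f v := by
  simp [wordMat]

theorem wordMat_cons {A : Type*} (f : A → ℤ) (a : A) (v : List A) :
    wordMat f (a :: v) = symMat (f a) * wordMat f v := by
  simp [wordMat]

theorem wordMat_nil {A : Type*} (f : A → ℤ) : wordMat f ([] : List A) = 1 := by
  simp [wordMat]

theorem symMat_transpose (r : ℤ) : (symMat r).transpose = symMat r := by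
  ext i j; fin_cases i <;> fin_cases j <;> simp [symMat]

theorem wordMat_reverse {A : Type*} (f : A → ℤ) (u : List A) :
    wordMat f u.reverse = (wordMat f u).transpose := by
  induction u with
  | nil => simp [wordMat_nil]
  | cons a u ih =>
    rw [List.reverse_cons, wordMat_append, ih, wordMat_cons, wordMat_cons, wordMat_nil,
      Matrix.transpose_mul, symMat_transpose, mul_one]

theorem wordMat_pos {A : Type*} (f : A → ℤ) (hf : ∀ a, 1 ≤ f a) (u : List A) :
    0 < wordMat f u 0 0 ∧ 0 ≤ wordMat f u 0 1 ∧ 0 ≤ wordMat f u 1 0 ∧ 0 < wordMat f u 1 1 := by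
  induction u with
  | nil => simp [wordMat_nil]
  | cons a u ih =>
    obtain ⟨h1, h2, h3, h4⟩ := ih
    have ha := hf a
    have ha' : 0 < f a := by omega
    rw [wordMat_cons]
    simp only [symMat, Matrix.mul_apply, Fin.sum_univ_two, Matrix.of_apply, Matrix.cons_val',
      Matrix.cons_val_zero, Matrix.cons_val_one, Matrix.cons_val_fin_one]
    refine ⟨by positivity, by positivity, by positivity, by positivity⟩

theorem wordMat_det_pos {A : Type*} (f : A → ℤ) (hf : ∀ a, 1 ≤ f a) (u : List A) :
    0 < (wordMat f u).det := by
  induction u with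
  | nil => simp [wordMat_nil]
  | cons a u ih =>
    rw [wordMat_cons, Matrix.det_mul]
    refine mul_pos ?_ ih
    have ha := hf a
    simp only [symMat, Matrix.det_fin_two_of]
    nlinarith

theorem skewD_conj (P N : Matrix (Fin 2) (Fin 2) ℤ) :
    skewD (P * N * P.transpose) = P.det * skewD N := by
  simp only [skewD, Matrix.det_fin_two, Matrix.mul_apply, Fin.sum_univ_two,
    Matrix.transpose_apply]
  ring

theorem skewD_core (r r' : ℤ) (hr : 1 ≤ r) (h : r < r') (M : Matrix (Fin 2) (Fin 2) ℤ)
    (h1 : 0 < M 0 0) (h2 : 0 ≤ M 0 1) (h3 : 0 ≤ M 1 0) (h4 : 0 < M 1 1) :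
    0 < skewD (symMat r * M * symMat r') := by
  have key : skewD (symMat r * M * symMat r') =
      (r * r' * (r' - r)) * M 0 0 + (r' * (r' + 1 - r)) * M 1 0
        + (r * (r' - (r + 1))) * M 0 1 + (r' - r) * M 1 1 := by
    simp only [skewD, symMat, Matrix.mul_apply, Fin.sum_univ_two, Matrix.of_apply,
      Matrix.cons_val', Matrix.cons_val_zero, Matrix.cons_val_one, Matrix.cons_val_fin_one]
    ring
  rw [key]
  have e0 : 0 < r := by omega
  have e1 : 0 < r' := by omega
  have e2 : 0 < r' - r := by omega
  have e3 : 0 < r' + 1 - r := by omega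
  have e4 : 0 ≤ r' - (r + 1) := by omega
  positivity

theorem split_of_diff {A : Type*} (u p s t : List A) (x y : A) (hxy : x ≠ y)
    (hu : u = p ++ x :: s) (hr : u.reverse = p ++ y :: t) :
    ∃ m, u = p ++ (x :: m ++ [y]) ++ p.reverse := by
  have h2 : u = t.reverse ++ y :: p.reverse := by
    rw [← List.reverse_reverse u, hr]; simp
  have h3 : p ++ x :: s = t.reverse ++ y :: p.reverse := hu ▸ h2
  rcases List.append_eq_append_iff.1 h3 with ⟨c, hc1, hc2⟩ | ⟨c, hc1, hc2⟩
  · cases c with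
    | nil => simp at hc2; exact absurd hc2.1 hxy
    | cons z m =>
      simp only [List.cons_append, List.cons.injEq] at hc2
      refine ⟨m, ?_⟩
      rw [hu, hc2.2]; simp
  · cases c with
    | nil => simp at hc2; exact absurd hc2.1.symm hxy
    | cons z c =>
      simp only [List.cons_append, List.cons.injEq] at hc2
      obtain ⟨rfl, hc2⟩ := hc2
      rw [hc1] at hc2
      simp only [List.reverse_append, List.reverse_cons, List.reverse_reverse,
        List.append_assoc] at hc2
      have := (List.append_inj hc2 (by simp)).2
      simp at this
      exact absurd this.1.symm hxy

theorem skewD_of_wlt {A : Type*} [LinearOrder A] (f : A → ℤ) (hf : ∀ a, 1 ≤ f a)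
    (hm : StrictMono f) (u : List A) (h : wlt u u.reverse) : 0 < skewD (wordMat f u) := by
  rcases h with ⟨h1, h2⟩ | ⟨p, s, t, x, y, hxy, h1, h2⟩
  · exact absurd (h2.eq_of_length (by simp)) h1
  · obtain ⟨m, rfl⟩ := split_of_diff u p s t x y hxy.ne h1 h2
    rw [wordMat_append, wordMat_append, wordMat_reverse, skewD_conj]
    refine mul_pos (wordMat_det_pos f hf p) ?_
    rw [wordMat_append, wordMat_cons, wordMat_cons, wordMat_nil, mul_one]
    obtain ⟨a, b, c, d⟩ := wordMat_pos f hf m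
    exact skewD_core _ _ (hf x) (hm hxy) _ a b c d

theorem exists_diff {A : Type*} : ∀ (u v : List A), u.length = v.length → u ≠ v →
    ∃ (p s t : List A) (x y : A), x ≠ y ∧ u = p ++ x :: s ∧ v = p ++ y :: t
  | [], [], _, h => absurd rfl h
  | [], _ :: _, h, _ => by simp at h
  | _ :: _, [], h, _ => by simp at h
  | a :: u, b :: v, hl, h => by
    by_cases hab : a = b
    · subst hab
      obtain ⟨p, s, t, x, y, h1, h2, h3⟩ := exists_diff u v (by simpa using hl)
        (fun e => h (by rw [e]))
      exact ⟨a :: p, s, t, x, y, h1, by simp [h2], by simp [h3]⟩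
    · exact ⟨[], u, v, a, b, hab, rfl, rfl⟩

theorem wlt_or {A : Type*} [LinearOrder A] (u : List A) (h : u ≠ u.reverse) :
    wlt u u.reverse ∨ wlt u.reverse u := by
  obtain ⟨p, s, t, x, y, h1, h2, h3⟩ := exists_diff u u.reverse (by simp) h
  rcases lt_or_gt_of_ne h1 with h4 | h4
  · exact Or.inl (Or.inr ⟨p, s, t, x, y, h4, h2, h3⟩)
  · exact Or.inr (Or.inr ⟨p, t, s, y, x, h4, h3, h2⟩)

theorem skewD_transpose (M : Matrix (Fin 2) (Fin 2) ℤ) : skewD M.transpose = - skewD M := by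
  simp [skewD]

theorem skewD_cases {A : Type*} [LinearOrder A] (f : A → ℤ) (hf : ∀ a, 1 ≤ f a)
    (hm : StrictMono f) (u : List A) (h : u ≠ u.reverse) :
    (wlt u u.reverse ∧ 0 < skewD (wordMat f u)) ∨
      (¬ wlt u u.reverse ∧ skewD (wordMat f u) < 0) := by
  rcases wlt_or u h with h1 | h1
  · exact Or.inl ⟨h1, skewD_of_wlt f hf hm u h1⟩
  · have h2 := skewD_of_wlt f hf hm u.reverse (by rwa [List.reverse_reverse])
    rw [wordMat_reverse, skewD_transpose] at h2
    refine Or.inr ⟨fun h3 => ?_, by omega⟩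
    have := skewD_of_wlt f hf hm u h3
    omega

theorem trace_diff (U V : Matrix (Fin 2) (Fin 2) ℤ) :
    (U.transpose * V).trace = (U * V).trace + skewD U * skewD V := by
  simp only [skewD, Matrix.trace_fin_two, Matrix.mul_apply, Fin.sum_univ_two,
    Matrix.transpose_apply]
  ring

theorem stmt12 {A : Type*} [LinearOrder A] [Fintype A] (w : List A) (hw : w ≠ []) :
    ∃ w' : List A, w'.Perm w ∧ cyclicSingular w' := by
  obtain ⟨f, hf, hm⟩ : ∃ f : A → ℤ, (∀ a, 1 ≤ f a) ∧ StrictMono f := by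
    refine ⟨fun a => ((Finset.univ.filter (fun b => b ≤ a)).card : ℤ), fun a => ?_, ?_⟩
    · have : 0 < (Finset.univ.filter (fun b => b ≤ a)).card :=
        Finset.card_pos.2 ⟨a, by simp⟩
      show (1:ℤ) ≤ ((Finset.univ.filter (fun b => b ≤ a)).card : ℤ)
      omega
    · intro a b hab
      have : (Finset.univ.filter (fun c => c ≤ a)).card
          < (Finset.univ.filter (fun c => c ≤ b)).card := by
        apply Finset.card_lt_card
        rw [Finset.ssubset_iff_of_subset]
        · exact ⟨b, by simp, by simpa using hab⟩
        · intro c hc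
          simp only [Finset.mem_filter, Finset.mem_univ, true_and] at hc ⊢
          exact hc.trans hab.le
      show ((Finset.univ.filter (fun c => c ≤ a)).card : ℤ)
          < ((Finset.univ.filter (fun c => c ≤ b)).card : ℤ)
      exact_mod_cast this
  obtain ⟨w', hw', hmin⟩ := Finset.exists_min_image w.permutations.toFinset
    (fun v => (wordMat f v).trace) ⟨w, by simp⟩
  simp only [List.mem_toFinset, List.mem_permutations] at hw' hmin
  refine ⟨w', hw', ?_⟩
  rintro u v - - ⟨s, t, hst, huv⟩ hu hv
  have hrot : (wordMat f w').trace = (wordMat f u * wordMat f v).trace := by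
    rw [← wordMat_append, huv, hst, wordMat_append, wordMat_append, Matrix.trace_mul_comm]
  have hperm : (u.reverse ++ v).Perm w := by
    refine List.Perm.trans ?_ hw'
    refine ((List.reverse_perm u).append_right v).trans ?_
    rw [huv, hst]
    exact List.perm_append_comm
  have h := hmin _ hperm
  rw [hrot, wordMat_append, wordMat_reverse, trace_diff] at h
  have h' : 0 ≤ skewD (wordMat f u) * skewD (wordMat f v) := by linarith
  rcases skewD_cases f hf hm u hu with ⟨a1, a2⟩ | ⟨a1, a2⟩ <;>
    rcases skewD_cases f hf hm v hv with ⟨b1, b2⟩ | ⟨b1, b2⟩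
  · exact iff_of_true a1 b1
  · nlinarith
  · nlinarith
  · exact iff_of_false a1 b1
end

section
/- Let ω be a cyclic singular word over a finite ordered alphabet A and b ∈ A with 0 < |δ_b(ω)| ≤ |ω|_b. Then ω contains exactly |δ_b(ω)| maximal runs of consecutive b's, i.e., |ω|_b − |ω|_{bb} = |δ_b(ω)| where |ω|_{bb} counts cyclic occurrences of the factor bb. -/
namespace S15

/-- forward infinite reading from position `i` -/
def F {A : Type*} {n : ℕ} (W : ZMod n → A) (i : ZMod n) : Lex (ℕ → A) :=
  toLex (fun k => W (i + k))

/-- backward infinite reading from position `i` -/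
def C {A : Type*} {n : ℕ} (W : ZMod n → A) (i : ZMod n) : Lex (ℕ → A) :=
  toLex (fun k => W (i - k))

theorem lex_iff {A : Type*} [LinearOrder A] (f g : ℕ → A) :
    toLex f < toLex g ↔ ∃ k, (∀ j < k, f j = g j) ∧ f k < g k := Iff.rfl

theorem lex_shift {A : Type*} [LinearOrder A] (f g : ℕ → A) (l : ℕ)
    (h : ∀ k < l, f k = g k) :
    toLex f < toLex g ↔ toLex (fun k => f (l + k)) < toLex (fun k => g (l + k)) := by
  rw [lex_iff, lex_iff]
  constructor
  · rintro ⟨k, hk, hlt⟩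
    have hkl : l ≤ k := by
      by_contra hc
      exact absurd (h k (by omega)) hlt.ne
    refine ⟨k - l, fun j hj => hk _ (by omega), ?_⟩
    have : l + (k - l) = k := by omega
    simpa only [this] using hlt
  · rintro ⟨k, hk, hlt⟩
    refine ⟨l + k, fun j hj => ?_, hlt⟩
    by_cases hjl : j < l
    · exact h j hjl
    · have := hk (j - l) (by omega)
      have e : l + (j - l) = j := by omega
      simpa only [e] using this

theorem CF_of_lt {A : Type*} [LinearOrder A] {n : ℕ} (W : ZMod n → A) (i j : ZMod n)
    (h : W j < W i) : C W j < F W i := by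
  refine (lex_iff _ _).2 ⟨0, by simp, by simpa using h⟩

theorem le_of_CF {A : Type*} [LinearOrder A] {n : ℕ} (W : ZMod n → A) (i j : ZMod n)
    (h : C W j < F W i) : W j ≤ W i := by
  obtain ⟨k, hk, hlt⟩ := (lex_iff _ _).1 h
  rcases Nat.eq_zero_or_pos k with rfl | hk0
  · simpa using hlt.le
  · simpa using (hk 0 hk0).le

theorem CF_step {A : Type*} [LinearOrder A] {n : ℕ} (W : ZMod n → A) (i j : ZMod n)
    (h : W j = W i) : C W j < F W i ↔ C W (j - 1) < F W (i + 1) := by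
  unfold C F
  rw [lex_shift _ _ 1 (by intro k hk; obtain rfl : k = 0 := by omega
                          simpa using h)]
  have e1 : (fun k : ℕ => W (j - ((1 + k : ℕ) : ZMod n))) = fun k : ℕ => W (j - 1 - k) := by
    funext k; congr 1; push_cast; ring
  have e2 : (fun k : ℕ => W (i + ((1 + k : ℕ) : ZMod n))) = fun k : ℕ => W (i + 1 + k) := by
    funext k; congr 1; push_cast; ring
  rw [e1, e2]

open Finset in
theorem core {A : Type*} [LinearOrder A] {n : ℕ} [NeZero n] (W : ZMod n → A) (b : A)
    (H : ∀ i j, C W j < F W i → C W (i - 1) < F W (j + 1))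
    (hd : #{i | W i < b} < #{i | b < W i})
    (hN : #{i | b < W i} ≤ #{i | W i = b} + #{i | W i < b}) :
    #{i | W i = b} + #{i | W i < b} = #{i | W i = b ∧ W (i + 1) = b} + #{i | b < W i} := by
  classical
  have H' : ∀ i j, C W j < F W i ↔ C W (i - 1) < F W (j + 1) := by
    intro i j
    refine ⟨H i j, fun h => ?_⟩
    have := H _ _ h
    simpa using this
  set Nl := #{i | W i < b} with hNl
  set Ng := #{i | b < W i} with hNg
  set N := #{i | W i = b} with hNdef
  set x := #{i | W i = b ∧ W (i + 1) = b} with hx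
  have hx' : #{i | W i = b ∧ W (i - 1) = b} = x := by
    rw [hx]
    refine Finset.card_bij' (fun i _ => i - 1) (fun i _ => i + 1) ?_ ?_ ?_ ?_ <;>
      simp +contextual
  have hends : #{i | W i = b ∧ W (i + 1) ≠ b} + x = N := by
    rw [hx, hNdef, ← Finset.card_filter_add_card_filter_not (s := {i | W i = b}) (fun i => W (i + 1) = b),
      Finset.filter_filter, Finset.filter_filter]
    simp only [ne_eq]; omega
  have hstarts : #{i | W i = b ∧ W (i - 1) ≠ b} + x = N := by
    rw [← hx', hNdef, ← Finset.card_filter_add_card_filter_not (s := {i | W i = b}) (fun i => W (i - 1) = b),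
      Finset.filter_filter, Finset.filter_filter]
    simp only [ne_eq]; omega
  have sym : ∀ i j, W i = b → W j = b → (C W j < F W i ↔ C W i < F W j) := by
    intro i j hi hj
    rw [CF_step W i j (by rw [hi, hj]), H']; simp
  let ρ : ZMod n → ℕ := fun i => #{j | W j = b ∧ C W j < F W i}
  have hσ : ∀ i, W i = b → #{j | W j = b ∧ C W i < F W j} = ρ i := by
    intro i hi
    congr 1; ext j
    simp only [mem_filter, mem_univ, true_and]
    constructor
    · rintro ⟨h1, h2⟩; exact ⟨h1, (sym i j hi h1).2 h2⟩
    · rintro ⟨h1, h2⟩; exact ⟨h1, (sym i j hi h1).1 h2⟩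
  have hρN : ∀ i, ρ i ≤ N := fun i => Finset.card_le_card (by
    intro j; simp +contextual)
  have r1 : ∀ i, W i = b → #{j | C W j < F W i} = Nl + ρ i := by
    intro i hi
    rw [hNl, ← Finset.card_union_of_disjoint]
    · congr 1; ext j
      simp only [mem_filter, mem_univ, true_and, mem_union]
      constructor
      · intro h
        have := le_of_CF W i j h
        rcases this.lt_or_eq with h' | h'
        · left; rwa [hi] at h'
        · right; exact ⟨h'.trans hi, h⟩
      · rintro (h | h)
        · exact CF_of_lt W i j (by rwa [hi])
        · exact h.2
    · rw [Finset.disjoint_left]; intro j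
      simp only [mem_filter, mem_univ, true_and]
      intro h h'; exact h.ne h'.1
  have r2 : ∀ i, W i = b → #{j | C W i < F W j} = Ng + ρ i := by
    intro i hi
    rw [hNg, ← hσ i hi, ← Finset.card_union_of_disjoint]
    · congr 1; ext j
      simp only [mem_filter, mem_univ, true_and, mem_union]
      constructor
      · intro h
        have := le_of_CF W j i h
        rcases this.lt_or_eq with h' | h'
        · left; rwa [hi] at h'
        · right; exact ⟨h'.symm.trans hi, h⟩
      · rintro (h | h)
        · exact CF_of_lt W j i (by rwa [hi])
        · exact h.2
    · rw [Finset.disjoint_left]; intro j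
      simp only [mem_filter, mem_univ, true_and]
      intro h h'; exact h.ne h'.1.symm
  have r3 : ∀ i, #{j | C W j < F W i} = #{j | C W (i - 1) < F W j} := by
    intro i
    refine Finset.card_bij' (fun i _ => i + 1) (fun i _ => i - 1) ?_ ?_ ?_ ?_
    · intro j; simp only [mem_filter, mem_univ, true_and]; exact (H' i j).1
    · intro j; simp only [mem_filter, mem_univ, true_and]; intro h; rw [H']; simpa using h
    · simp
    · simp
  have hdisj : Disjoint ({i | W i < b} : Finset (ZMod n)) ({i | W i = b} : Finset (ZMod n)) := by
    rw [Finset.disjoint_left]; intro j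
    simp only [mem_filter, mem_univ, true_and]
    intro h h'; exact h.ne h'
  have hdisj2 : Disjoint ({i | b < W i} : Finset (ZMod n)) ({i | W i = b} : Finset (ZMod n)) := by
    rw [Finset.disjoint_left]; intro j
    simp only [mem_filter, mem_univ, true_and]
    intro h h'; exact h.ne h'.symm
  have next : ∀ i, W i = b → #{j | C W j < F W (i + 1)} = Ng + ρ i := by
    intro i hi
    rw [r3, add_sub_cancel_right, r2 i hi]
  have nonend : ∀ i, W i = b → W (i + 1) = b → Ng + ρ i ≤ Nl + N := by
    intro i hi h
    rw [← next i hi, r1 _ h]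
    have := hρN (i + 1); omega
  have hend : ∀ i, W i = b → W (i + 1) ≠ b → Nl + N ≤ Ng + ρ i := by
    intro i hi h
    rcases lt_or_gt_of_ne h with h | h
    · exfalso
      have : #{j | C W j < F W (i + 1)} ≤ Nl := Finset.card_le_card (by
        intro j; simp only [mem_filter, mem_univ, true_and]
        intro hj; exact (le_of_CF _ _ _ hj).trans_lt h)
      rw [next i hi] at this
      omega
    · rw [← next i hi, hNl, hNdef, ← Finset.card_union_of_disjoint hdisj]
      refine Finset.card_le_card ?_
      intro j; simp only [mem_filter, mem_univ, true_and, mem_union]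
      intro hj
      refine CF_of_lt _ _ _ ?_
      rcases hj with hj | hj
      · exact hj.trans h
      · rwa [hj]
  have prev : ∀ i, W i = b → #{j | C W (i - 1) < F W j} = Nl + ρ i := by
    intro i hi
    rw [← r3, r1 i hi]
  have nonstart : ∀ i, W i = b → W (i - 1) = b → Ng ≤ Nl + ρ i := by
    intro i hi h
    rw [← prev i hi, r2 _ h]; omega
  have hstart : ∀ i, W i = b → W (i - 1) ≠ b → Nl + ρ i ≤ Ng := by
    intro i hi h
    rcases lt_or_gt_of_ne h with h | h
    · exfalso
      have : Ng + N ≤ #{j | C W (i - 1) < F W j} := by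
        rw [hNg, hNdef, ← Finset.card_union_of_disjoint hdisj2]
        refine Finset.card_le_card ?_
        intro j; simp only [mem_filter, mem_univ, true_and, mem_union]
        intro hj
        refine CF_of_lt _ _ _ ?_
        rcases hj with hj | hj
        · exact h.trans hj
        · rwa [hj]
      rw [prev i hi] at this
      have := hρN i
      omega
    · rw [← prev i hi]
      refine Finset.card_le_card ?_
      intro j; simp only [mem_filter, mem_univ, true_and]
      intro hj; exact lt_of_lt_of_le h (le_of_CF _ _ _ hj)
  rcases lt_trichotomy (x + Ng) (N + Nl) with hlt | heq | hgt
  · exfalso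
    have hne : ({i | W i = b ∧ W (i - 1) ≠ b} : Finset (ZMod n)).Nonempty := by
      rw [← Finset.card_pos]; omega
    obtain ⟨J, hJ, hmin⟩ := Finset.exists_min_image _ (C W) hne
    simp only [mem_filter, mem_univ, true_and] at hJ hmin
    have key : #{i | W i = b ∧ W (i + 1) ≠ b} ≤ ρ J := by
      rw [← hσ J hJ.1]
      refine Finset.card_le_card ?_
      intro i; simp only [mem_filter, mem_univ, true_and]
      intro hi
      refine ⟨hi.1, ?_⟩
      have h1 := hend i hi.1 hi.2
      by_contra hc
      have : ρ i ≤ x := by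
        rw [← hx']
        refine Finset.card_le_card ?_
        intro j; simp only [mem_filter, mem_univ, true_and]
        intro hj
        refine ⟨hj.1, ?_⟩
        by_contra hj2
        exact hc ((hmin j ⟨hj.1, hj2⟩).trans_lt hj.2)
      omega
    have := hstart J hJ.1 hJ.2
    omega
  · exact heq.symm
  · exfalso
    have hne : ({i | W i = b ∧ W (i - 1) = b} : Finset (ZMod n)).Nonempty := by
      rw [← Finset.card_pos]; omega
    obtain ⟨J, hJ, hmax⟩ := Finset.exists_max_image _ (C W) hne
    simp only [mem_filter, mem_univ, true_and] at hJ hmax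
    have h1 := nonstart J hJ.1 hJ.2
    have h2 : ∃ i, W i = b ∧ W (i + 1) = b ∧ C W J < F W i := by
      by_contra hc
      push Not at hc
      have : ρ J ≤ #{i | W i = b ∧ W (i + 1) ≠ b} := by
        rw [← hσ J hJ.1]
        refine Finset.card_le_card ?_
        intro j; simp only [mem_filter, mem_univ, true_and]
        intro hj
        exact ⟨hj.1, fun h => hc j hj.1 h hj.2⟩
      omega
    obtain ⟨i, hi, hi1, hi2⟩ := h2
    have h3 : x ≤ ρ i := by
      rw [← hx']
      refine Finset.card_le_card ?_
      intro j; simp only [mem_filter, mem_univ, true_and]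
      intro hj
      exact ⟨hj.1, (hmax j hj).trans_lt hi2⟩
    have := nonend i hi hi1
    omega

theorem wlt_iff {A : Type*} [LinearOrder A] (f g : ℕ → A) (l : ℕ)
    (h : (List.range l).map f ≠ (List.range l).map g) :
    wlt ((List.range l).map f) ((List.range l).map g) ↔ toLex f < toLex g := by
  rw [lex_iff]
  constructor
  · rintro (⟨h1, h2⟩ | ⟨p, s, t, x, y, hxy, hu, hv⟩)
    · exact absurd (h2.eq_of_length (by simp)) h1
    · have hl : p.length < l := by
        have := congrArg List.length hu
        simp at this; omega
      have gu : ∀ k (hk : k < l), f k = (p ++ x :: s)[k]? := by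
        intro k hk; rw [← hu]; simp [hk]
      have gv : ∀ k (hk : k < l), g k = (p ++ y :: t)[k]? := by
        intro k hk; rw [← hv]; simp [hk]
      refine ⟨p.length, fun j hj => ?_, ?_⟩
      · have a := gu j (by omega)
        have c := gv j (by omega)
        rw [List.getElem?_append_left hj] at a c
        exact Option.some_injective _ (a.trans c.symm)
      · have a := gu _ hl
        have c := gv _ hl
        simp at a c
        rwa [a, c]
  · rintro ⟨k, hk, hlt⟩
    right
    have hkl : k < l := by
      by_contra hc
      apply h
      apply List.map_congr_left
      intro a ha
      exact hk a (by simp at ha; omega)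
    obtain ⟨m, rfl⟩ : ∃ m, l = k + (m + 1) := ⟨l - k - 1, by omega⟩
    refine ⟨(List.range k).map f, (List.range m).map (fun j => f (k + (j + 1))),
      (List.range m).map (fun j => g (k + (j + 1))), f k, g k, hlt, ?_, ?_⟩
    · rw [List.range_add, List.range_succ_eq_map]; simp [Function.comp_def]
    · have : (List.range k).map f = (List.range k).map g :=
        List.map_congr_left (fun a ha => hk a (by simpa using ha))
      rw [this, List.range_add, List.range_succ_eq_map]; simp [Function.comp_def]

/-- the cyclic word as a function on positions -/
def Wd {A : Type*} (w : List A) (hw : w.length ≠ 0) : ZMod w.length → A :=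
  fun i => w[i.val]'(by have : NeZero w.length := ⟨hw⟩; exact ZMod.val_lt i)

theorem Wd_rotate {A : Type*} (w : List A) (hw : w.length ≠ 0) (i : ZMod w.length) :
    (List.range w.length).map (fun k : ℕ => Wd w hw (i + k)) = w.rotate i.val := by
  have : NeZero w.length := ⟨hw⟩
  apply List.ext_getElem
  · simp
  · intro k h1 h2
    rw [List.getElem_rotate]
    simp only [List.getElem_map, List.getElem_range, Wd]
    congr 1
    rw [ZMod.val_add, ZMod.val_natCast]
    simp [add_comm]

theorem sing_main {A : Type*} [LinearOrder A] (w : List A) (hw : w.length ≠ 0)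
    (hs : cyclicSingular w) (i j : ZMod w.length) :
    (C (Wd w hw) j < F (Wd w hw) i ↔ C (Wd w hw) (i - 1) < F (Wd w hw) (j + 1)) ∧
    (F (Wd w hw) i < C (Wd w hw) j ↔ F (Wd w hw) (j + 1) < C (Wd w hw) (i - 1)) := by
  have : NeZero w.length := ⟨hw⟩
  set W := Wd w hw with hWdef
  by_cases hij : i = j + 1
  · subst hij; simp
  set l := (j + 1 - i).val with hl
  have hln : l < w.length := ZMod.val_lt _
  have hl0 : l ≠ 0 := by
    intro h
    rw [hl, ZMod.val_eq_zero, sub_eq_zero] at h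
    exact hij h.symm
  have hlc : (l : ZMod w.length) = j + 1 - i := by rw [hl, ZMod.natCast_zmod_val]
  have hmc : ((w.length - l : ℕ) : ZMod w.length) = i - (j + 1) := by
    rw [Nat.cast_sub hln.le, hlc]; simp
  let fi : ℕ → A := fun k => W (i + k)
  let cj : ℕ → A := fun k => W (j - k)
  let fj : ℕ → A := fun k => W (j + 1 + k)
  let ci : ℕ → A := fun k => W (i - 1 - k)
  have s1 : (fun k => fi (l + k)) = fj := by
    funext k; simp only [fi, fj]; congr 1; push_cast; rw [hlc]; ring
  have s2 : (fun k => cj (l + k)) = ci := by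
    funext k; simp only [cj, ci]; congr 1; push_cast; rw [hlc]; ring
  have s3 : (fun k => fj (w.length - l + k)) = fi := by
    funext k; simp only [fi, fj]; congr 1; rw [Nat.cast_add, hmc]; ring
  have s4 : (fun k => ci (w.length - l + k)) = cj := by
    funext k; simp only [cj, ci]; congr 1; rw [Nat.cast_add, hmc]; ring
  change (toLex cj < toLex fi ↔ toLex ci < toLex fj) ∧ (toLex fi < toLex cj ↔ toLex fj < toLex ci)
  have revu : ((List.range l).map fi).reverse = (List.range l).map cj := by
    apply List.ext_getElem
    · simp
    · intro k h1 h2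
      simp only [List.length_reverse, List.length_map, List.length_range] at h1
      simp only [List.getElem_reverse, List.getElem_map, List.getElem_range, List.length_map,
        List.length_range, fi, cj]
      congr 1
      rw [Nat.cast_sub (by omega), Nat.cast_sub (by omega), hlc]
      push_cast; ring
  have revv : ((List.range (w.length - l)).map fj).reverse = (List.range (w.length - l)).map ci := by
    apply List.ext_getElem
    · simp
    · intro k h1 h2
      simp only [List.length_reverse, List.length_map, List.length_range] at h1
      simp only [List.getElem_reverse, List.getElem_map, List.getElem_range, List.length_map,
        List.length_range, fj, ci]
      congr 1
      rw [Nat.cast_sub (by omega), Nat.cast_sub (by omega), hmc]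
      push_cast; ring
  by_cases hu : (List.range l).map fi = (List.range l).map cj
  · have he : ∀ k < l, fi k = cj k := by
      intro k hk
      exact List.map_inj_left.1 hu k (by simpa using hk)
    rw [lex_shift fi cj l he, lex_shift cj fi l (fun k hk => (he k hk).symm), s1, s2]
    simp
  by_cases hv : (List.range (w.length - l)).map fj = (List.range (w.length - l)).map ci
  · have he : ∀ k < w.length - l, fj k = ci k := by
      intro k hk
      exact List.map_inj_left.1 hv k (by simpa using hk)
    rw [lex_shift fj ci _ he, lex_shift ci fj _ (fun k hk => (he k hk).symm), s3, s4]
    simp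
  have hrot : isRot w ((List.range l).map fi ++ (List.range (w.length - l)).map fj) := by
    have e : (List.range l).map fi ++ (List.range (w.length - l)).map fj = w.rotate i.val := by
      rw [← Wd_rotate w hw i, ← s1]
      have : List.range w.length = List.range (l + (w.length - l)) := by
        congr 1; omega
      rw [this, List.range_add, List.map_append, List.map_map]
      rfl
    rw [e]
    refine ⟨w.take i.val, w.drop i.val, (List.take_append_drop _ _).symm, ?_⟩
    exact List.rotate_eq_drop_append_take (ZMod.val_lt i).le
  have key := hs _ _ (by simpa using hl0) (by simp; omega) hrot (by rwa [revu]) (by rwa [revv])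
  rw [revu, revv, wlt_iff _ _ _ hu, wlt_iff _ _ _ hv] at key
  have n1 : toLex fi ≠ toLex cj := by
    intro h; apply hu; rw [toLex.injective h]
  have n2 : toLex fj ≠ toLex ci := by
    intro h; apply hv; rw [toLex.injective h]
  refine ⟨?_, key⟩
  constructor
  · intro h
    exact lt_of_le_of_ne (not_lt.1 fun h' => lt_asymm h (key.2 h')) n2.symm
  · intro h
    exact lt_of_le_of_ne (not_lt.1 fun h' => lt_asymm h (key.1 h')) n1.symm

open Finset in
theorem core_dual {A : Type*} [LinearOrder A] {n : ℕ} [NeZero n] (W : ZMod n → A) (b : A)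
    (H : ∀ i j, F W i < C W j → F W (j + 1) < C W (i - 1))
    (hd : #{i | b < W i} < #{i | W i < b})
    (hN : #{i | W i < b} ≤ #{i | W i = b} + #{i | b < W i}) :
    #{i | W i = b} + #{i | b < W i} = #{i | W i = b ∧ W (i + 1) = b} + #{i | W i < b} := by
  have tr : ∀ i j, C (A := Aᵒᵈ) W j < F (A := Aᵒᵈ) W i ↔ F W i < C W j := by
    intro i j
    constructor
    · rintro ⟨k, h1, h2⟩; exact ⟨k, fun a ha => (h1 a ha).symm, h2⟩
    · rintro ⟨k, h1, h2⟩; exact ⟨k, fun a ha => (h1 a ha).symm, h2⟩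
  exact core (A := Aᵒᵈ) W b (fun i j h => (tr _ _).2 (H i j ((tr _ _).1 h))) hd hN

open Finset in
theorem card_countP {A : Type*} (w : List A) (hw : w.length ≠ 0) [NeZero w.length]
    (p : A → Prop) [DecidablePred p] :
    #{i | p (Wd w hw i)} = w.countP (fun a => decide (p a)) := by
  have h0 : w = (List.range w.length).map (fun k : ℕ => Wd w hw k) := by
    have := Wd_rotate w hw 0
    simp at this
    exact this.symm
  conv_rhs => rw [h0]
  rw [List.countP_map, List.countP_eq_length_filter]
  rw [← List.toFinset_card_of_nodup (List.Nodup.filter _ List.nodup_range)]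
  refine Finset.card_bij' (fun i _ => i.val) (fun k _ => (k : ZMod w.length)) ?_ ?_ ?_ ?_
  · intro i hi
    simp at hi ⊢
    exact ⟨ZMod.val_lt i, hi⟩
  · intro k hk
    simp at hk ⊢
    exact hk.2
  · intro i _; simp
  · intro k hk
    simp at hk
    exact ZMod.val_cast_of_lt hk.1

open Finset in
theorem card_bb {A : Type*} [DecidableEq A] (w : List A) (hw : w.length ≠ 0) [NeZero w.length]
    (b : A) :
    #{i | Wd w hw i = b ∧ Wd w hw (i + 1) = b} = (w.zip (w.rotate 1)).count (b, b) := by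
  have h0 : (List.range w.length).map (fun k : ℕ => Wd w hw k) = w := by
    have := Wd_rotate w hw 0
    simpa using this
  have h1 : (List.range w.length).map (fun k : ℕ => Wd w hw (k + 1)) = w.rotate 1 := by
    have := Wd_rotate w hw 1
    rw [← List.rotate_mod w 1]
    rw [ZMod.val_one_eq_one_mod] at this
    rw [← this]
    simp only [add_comm]
  have h2 : w.zip (w.rotate 1) =
      (List.range w.length).map (fun k : ℕ => (Wd w hw k, Wd w hw (k + 1))) := by
    have h3 : ∀ a c : List A, (List.range w.length).map (fun k : ℕ => Wd w hw k) = a →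
        (List.range w.length).map (fun k : ℕ => Wd w hw (k + 1)) = c →
        a.zip c = (List.range w.length).map (fun k : ℕ => (Wd w hw k, Wd w hw (k + 1))) := by
      rintro a c rfl rfl
      exact List.zip_map'
    exact h3 _ _ h0 h1
  rw [h2, List.count, List.countP_map, List.countP_eq_length_filter]
  rw [← List.toFinset_card_of_nodup (List.Nodup.filter _ List.nodup_range)]
  refine Finset.card_bij' (fun i _ => i.val) (fun k _ => (k : ZMod w.length)) ?_ ?_ ?_ ?_
  · intro i hi
    simp at hi ⊢
    exact ⟨ZMod.val_lt i, hi⟩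
  · intro k hk
    simp at hk ⊢
    exact hk.2
  · intro i _; simp
  · intro k hk
    simp at hk
    exact ZMod.val_cast_of_lt hk.1

open Finset in
theorem sum_count {A : Type*} [DecidableEq A] [Fintype A] (w : List A) (p : A → Prop)
    [DecidablePred p] :
    ∑ c ∈ Finset.univ.filter p, (w.count c : ℤ) = (w.countP (fun a => decide (p a)) : ℤ) := by
  induction w with
  | nil => simp
  | cons a t ih =>
    simp only [List.count_cons, List.countP_cons, Nat.cast_add, Finset.sum_add_distrib, ih]
    congr 1
    by_cases h : p a <;> simp [h, Finset.sum_ite_eq]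

end S15

theorem stmt15 {A : Type*} [LinearOrder A] [Fintype A] (w : List A) (b : A)
    (hs : cyclicSingular w) (h0 : deltaW w b ≠ 0)
    (hle : (deltaW w b).natAbs ≤ w.count b) :
    w.count b - (w.zip (w.rotate 1)).count (b, b) = (deltaW w b).natAbs := by
  have hw : w.length ≠ 0 := by
    intro h
    obtain rfl := List.length_eq_zero_iff.1 h
    simp [deltaW] at h0
  have : NeZero w.length := ⟨hw⟩
  have hc : w.count b = w.countP (fun a => decide (a = b)) := by
    rw [List.count]; congr 1
  have hS := S15.sing_main w hw hs
  have e1 := (S15.card_countP w hw (fun a => a = b)).trans hc.symm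
  have e2 := S15.card_countP w hw (fun a => a < b)
  have e3 := S15.card_countP w hw (fun a => b < a)
  have e4 := S15.card_bb w hw b
  have c1 := S15.core (S15.Wd w hw) b (fun i j => (hS i j).1.1)
  have c2 := S15.core_dual (S15.Wd w hw) b (fun i j => (hS i j).2.1)
  rw [deltaW, S15.sum_count, S15.sum_count] at h0 hle ⊢
  rw [e1, e2, e3, e4] at c1 c2
  rcases lt_or_gt_of_ne h0 with h | h
  · have := c2 (by omega) (by omega)
    omega
  · have := c1 (by omega) (by omega)
    omega
end

section
/- Let b ∈ A and ω a cyclic word over the finite ordered alphabet A with δ_b(ω) ≠ 0. Then ω is singular if and only if ξ_b(ω) is singular. -/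
/-- The cyclic version of `ξ_b`: inserts one extra `b` into each maximal cyclic run of
`b`'s (i.e. before each cyclic run start) and a `b` between any two cyclically adjacent
letters that are both strictly larger than `b` or both strictly smaller than `b`. -/
def cxi {A : Type*} [LinearOrder A] (b : A) (w : List A) : List A :=
  (w.zip (w.rotate 1)).flatMap fun p =>
    if (p.1 ≠ b ∧ p.2 = b) ∨ (p.1 < b ∧ p.2 < b) ∨ (b < p.1 ∧ b < p.2) then [p.1, b]
    else [p.1]

section helpers
set_option linter.unreachableTactic false
set_option linter.unusedTactic false
set_option linter.unusedSectionVars false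
set_option linter.unusedSimpArgs false
set_option linter.unnecessarySimpa false
variable {A : Type*} [LinearOrder A]

def insb (b a c : A) : List A :=
  if (a ≠ b ∧ c = b) ∨ (a < b ∧ c < b) ∨ (b < a ∧ b < c) then [b] else []

def xX (b : A) : List A → List A
  | [] => []
  | [a] => [a]
  | a :: c :: r => a :: (insb b a c ++ xX b (c :: r))

def yY (b : A) : List A → List A
  | [] => []
  | [a] => if a = b then [b, b] else [a]
  | a :: c :: r => a :: (insb b c a ++ yY b (c :: r))

def LL (f g : List A) : Prop :=
  ∃ (p s t : List A) (x y : A), x < y ∧ f = p ++ x :: s ∧ g = p ++ y :: t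

def DD (f g : List A) : Prop :=
  ∃ (m : List A) (a c x y : A), a < c ∧ x < y ∧ (a :: (m ++ [x])) <:+: f ∧ (c :: (m ++ [y])) <:+: g

def Fac (w f : List A) : Prop := ∃ K : ℕ, f <:+: (List.replicate K w).flatten

def NS (w : List A) : Prop := ∃ f g, Fac w f ∧ Fac w g.reverse ∧ DD f g

theorem Fac.sub {w f g : List A} (h : Fac w f) (hg : g <:+: f) : Fac w g := by
  obtain ⟨K, h⟩ := h
  exact ⟨K, hg.trans h⟩

theorem insb_cases (b a c : A) :
    (a = b ∧ insb b a c = []) ∨ (a < b ∧ c < b ∧ insb b a c = [b]) ∨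
    (a < b ∧ c = b ∧ insb b a c = [b]) ∨ (a < b ∧ b < c ∧ insb b a c = []) ∨
    (b < a ∧ c < b ∧ insb b a c = []) ∨ (b < a ∧ c = b ∧ insb b a c = [b]) ∨
    (b < a ∧ b < c ∧ insb b a c = [b]) := by
  unfold insb
  rcases lt_trichotomy a b with h | h | h
  · rcases lt_trichotomy c b with h' | h' | h'
    · simp [h, h']
    · simp [h, h', h.ne]
    · simp [h, h', h.ne, h'.ne', h.not_gt, h'.not_gt]
  · simp [h]
  · rcases lt_trichotomy c b with h' | h' | h'
    · simp [h, h', h'.ne, h.ne', h.not_gt, h'.not_gt]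
    · simp [h, h', h.ne']
    · simp [h, h']

theorem insb_or (b a c : A) : insb b a c = [] ∨ insb b a c = [b] := by
  unfold insb; split <;> simp

theorem insb_rev (b a c : A) : (insb b a c).reverse = insb b a c := by
  unfold insb; split <;> rfl

theorem yY_two (b e x : A) : e :: (insb b x e ++ if x = b then [b, b] else [x]) =
    (if e = b then [b, b] else [e]) ++ insb b e x ++ [x] := by
  grind [insb]

theorem yY_snoc (b : A) (f : List A) (e x : A) :
    yY b (f ++ [e, x]) = yY b (f ++ [e]) ++ insb b e x ++ [x] := by
  induction f with
  | nil =>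
    simp only [List.nil_append, yY]
    exact yY_two b e x
  | cons a f ih =>
    cases f with
    | nil => simpa [yY] using ih
    | cons c f => simpa [yY] using ih

theorem yY_reverse (b : A) (f : List A) : yY b f.reverse = (yY b f).reverse := by
  induction f with
  | nil => simp [yY]
  | cons a f ih =>
    cases f with
    | nil => simp only [List.reverse_cons, List.reverse_nil, List.nil_append, yY]; split <;> simp
    | cons c r =>
      have := yY_snoc b r.reverse c a
      simp only [List.reverse_cons, List.append_assoc, List.cons_append, List.nil_append] at this ih ⊢
      rw [this, ih]
      simp [yY, insb_rev]

theorem yY_eq (b : A) (c : A) (r : List A) :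
    yY b (c :: r) = (if c = b then [b] else []) ++ xX b (c :: r) := by
  induction r generalizing c with
  | nil => simp only [yY, xX]; split <;> simp_all
  | cons d r ih =>
    simp only [yY, xX, ih]
    have := yY_two b c d
    have e1 : (if d = b then [b, b] else [d]) = (if d = b then [b] else []) ++ [d] := by
      split <;> simp_all
    have e2 : (if c = b then [b, b] else [c]) = (if c = b then [b] else []) ++ [c] := by
      split <;> simp_all
    rw [e1, e2] at this
    simp only [← List.append_assoc, ← List.cons_append] at this
    rw [List.append_left_inj] at this
    rw [← List.append_assoc, ← List.cons_append, ← List.cons_append, this]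
    simp

theorem xX_suffix_yY (b : A) (f : List A) : xX b f <:+ yY b f := by
  cases f with
  | nil => simp [xX, yY]
  | cons c r => rw [yY_eq]; exact List.suffix_append _ _

theorem yY_suffix_xX (b a : A) (f : List A) : yY b f <:+ xX b (a :: f) := by
  cases f with
  | nil => simp [yY]
  | cons c r =>
    rw [yY_eq, xX, ← List.cons_append]
    unfold insb
    rcases eq_or_ne c b with h | h
    · rcases eq_or_ne a b with h' | h'
      · subst h; simp [h']
      · refine ⟨[a], ?_⟩
        simp [h, h']
    · simp only [h, if_false, List.nil_append]
      exact List.suffix_append _ _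

theorem xX_suffix (b : A) (p q : List A) : xX b q <:+ xX b (p ++ q) := by
  induction p with
  | nil => simp
  | cons a p ih =>
    refine ih.trans ?_
    rw [List.cons_append]
    cases h : p ++ q with
    | nil => simp [xX]
    | cons c r => rw [xX, ← List.cons_append]; exact List.suffix_append _ _

theorem xX_prefix_mono (b : A) (p q : List A) : xX b p <+: xX b (p ++ q) := by
  induction p with
  | nil => simp [xX]
  | cons a p ih =>
    cases p with
    | nil =>
      cases q with
      | nil => simp
      | cons c r => simp [xX]
    | cons c r =>
      simp only [List.cons_append, xX] at ih ⊢
      simpa using ih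

theorem xX_infix_mono (b : A) {f g : List A} (h : f <:+: g) : xX b f <:+: xX b g := by
  obtain ⟨s, t, rfl⟩ := h
  exact (xX_suffix b s f).isInfix.trans (xX_prefix_mono b (s ++ f) t).isInfix

theorem xX_snoc (b : A) (f : List A) (e x : A) :
    xX b (f ++ [e, x]) = xX b (f ++ [e]) ++ insb b e x ++ [x] := by
  induction f with
  | nil => simp [xX]
  | cons a f ih =>
    cases f with
    | nil => simpa [xX] using ih
    | cons c f => simpa [xX] using ih

theorem insb_lt (b e : A) {x y : A} (h : x < y) : LL (insb b e x ++ [x]) (insb b e y ++ [y]) := by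
  have h2 : ∀ (x y : A) s t, x < y → LL (x :: s) (y :: t) :=
    fun x y s t h => ⟨[], s, t, x, y, h, rfl, rfl⟩
  have h3 : ∀ (b x y : A) s t, x < y → LL (b :: x :: s) (b :: y :: t) :=
    fun b x y s t h => ⟨[b], s, t, x, y, h, rfl, rfl⟩
  unfold insb
  split_ifs <;> simp only [List.nil_append, List.cons_append]
  · exact h3 _ _ _ _ _ h
  · apply h2; grind
  · apply h2; grind
  · apply h2; grind

theorem LL.append {f g : List A} (h : LL f g) (p s t : List A) : LL (p ++ f ++ s) (p ++ g ++ t) := by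
  obtain ⟨q, u, v, x, y, h, rfl, rfl⟩ := h
  exact ⟨p ++ q, u ++ s, v ++ t, x, y, h, by simp, by simp⟩

theorem LL.of_prefix_le {f g f' g' : List A} (h : LL f g) (hf : f <+: f') (hg : g <+: g') :
    LL f' g' := by
  obtain ⟨s, rfl⟩ := hf
  obtain ⟨t, rfl⟩ := hg
  simpa using h.append [] s t

theorem LL_tri (f g : List A) : LL f g ∨ LL g f ∨ f <+: g ∨ g <+: f := by
  induction f generalizing g with
  | nil => simp
  | cons a f ih =>
    cases g with
    | nil => simp
    | cons c g =>
      rcases lt_trichotomy a c with h | h | h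
      · exact Or.inl ⟨[], f, g, a, c, h, rfl, rfl⟩
      · subst h
        rcases ih g with h | h | h | h
        · left; simpa using h.append [a] [] []
        · right; left; simpa using h.append [a] [] []
        · simp [h]
        · simp [h]
      · exact Or.inr (Or.inl ⟨[], g, f, c, a, h, rfl, rfl⟩)

theorem LL_cons {a c : A} {f g : List A} : LL (a :: f) (c :: g) ↔ a < c ∨ (a = c ∧ LL f g) := by
  constructor
  · rintro ⟨p, s, t, x, y, h, h1, h2⟩
    cases p with
    | nil => simp at h1 h2; left; rw [h1.1, h2.1]; exact h
    | cons d p =>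
      simp at h1 h2
      exact Or.inr ⟨h1.1.trans h2.1.symm, p, s, t, x, y, h, h1.2, h2.2⟩
  · rintro (h | ⟨rfl, h⟩)
    · exact ⟨[], f, g, a, c, h, rfl, rfl⟩
    · simpa using h.append [a] [] []

theorem LL_nil_left {f : List A} : ¬ LL [] f := by
  rintro ⟨p, s, t, x, y, h, h1, h2⟩; simp at h1

theorem LL_nil_right {f : List A} : ¬ LL f [] := by
  rintro ⟨p, s, t, x, y, h, h1, h2⟩; simp at h2

theorem LL_asymm {f g : List A} (h : LL f g) : ¬ LL g f := by
  induction f generalizing g with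
  | nil => exact absurd h LL_nil_left
  | cons a f ih =>
    cases g with
    | nil => exact absurd h LL_nil_right
    | cons c g =>
      rw [LL_cons] at h ⊢
      rintro (h' | ⟨h', h2⟩)
      · rcases h with h | ⟨h, -⟩ <;> order
      · rcases h with h | ⟨h, h3⟩
        · order
        · exact ih h3 h2

theorem LL_irrefl {f : List A} : ¬ LL f f := fun h => LL_asymm h h

theorem LL_not_prefix_le {f g : List A} (h : LL f g) : ¬ f <+: g := fun hp =>
  LL_irrefl (h.of_prefix_le hp (List.prefix_refl g))

theorem LL_not_prefix_le' {f g : List A} (h : LL f g) : ¬ g <+: f := fun hp =>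
  LL_irrefl (h.of_prefix_le (List.prefix_refl f) hp)

theorem xX_mono (b N : A) {f g : List A} (h : LL f g) : LL (xX b (N :: f)) (xX b (N :: g)) := by
  obtain ⟨p, s, t, x, y, h, rfl, rfl⟩ := h
  obtain ⟨p', e, he⟩ : ∃ p' e, N :: p = p' ++ [e] :=
    ⟨(N :: p).dropLast, (N :: p).getLast (by simp), by simp [List.dropLast_append_getLast]⟩
  have h1 := (insb_lt b e h).append (xX b (p' ++ [e])) [] []
  refine h1.of_prefix_le ?_ ?_
  · have := xX_prefix_mono b (p' ++ [e, x]) s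
    rw [xX_snoc] at this
    have e2 : N :: (p ++ x :: s) = p' ++ [e, x] ++ s := by
      rw [← List.cons_append, he]; simp
    rw [e2]; simpa using this
  · have := xX_prefix_mono b (p' ++ [e, y]) t
    rw [xX_snoc] at this
    have e2 : N :: (p ++ y :: t) = p' ++ [e, y] ++ t := by
      rw [← List.cons_append, he]; simp
    rw [e2]; simpa using this

theorem xX_mono_inv (b N : A) {f g : List A} (h : LL (xX b (N :: f)) (xX b (N :: g))) : LL f g := by
  rcases LL_tri f g with h' | h' | ⟨s, rfl⟩ | ⟨s, rfl⟩
  · exact h'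
  · exact absurd (xX_mono b N h') (LL_asymm h)
  · exact absurd (xX_prefix_mono b (N :: f) s) (LL_not_prefix_le h)
  · exact absurd (xX_prefix_mono b (N :: g) s) (LL_not_prefix_le' h)

theorem yY_mono_inv {b N : A} (hN : N ≠ b) {f g u v : List A} (hf : yY b (N :: f) = N :: u)
    (hg : yY b (N :: g) = N :: v) (h : LL u v) : LL f g := by
  rw [yY_eq] at hf hg
  simp only [hN, if_false, List.nil_append] at hf hg
  apply xX_mono_inv b N
  rw [hf, hg, LL_cons]
  exact Or.inr ⟨rfl, h⟩

theorem DD_mk {f1 f2 g1 g2 : List A} (c : List A) (h1 : LL f1 g1) (h2 : LL f2 g2) :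
    DD (f1.reverse ++ c ++ f2) (g1.reverse ++ c ++ g2) := by
  obtain ⟨p, s, t, x, y, h, rfl, rfl⟩ := h1
  obtain ⟨p', s', t', x', y', h', rfl, rfl⟩ := h2
  refine ⟨p.reverse ++ c ++ p', x, y, x', y', h, h', ⟨s.reverse, s', ?_⟩, ⟨t.reverse, t', ?_⟩⟩ <;>
    simp

theorem DD.mono {f g f' g' : List A} (h : DD f g) (hf : f <:+: f') (hg : g <:+: g') : DD f' g' := by
  obtain ⟨m, a, c, x, y, h1, h2, h3, h4⟩ := h
  exact ⟨m, a, c, x, y, h1, h2, h3.trans hf, h4.trans hg⟩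

theorem yY_split {b N : A} (hN : N ≠ b) (f u v : List A) (h : yY b f = u ++ N :: v) :
    ∃ f1 f2, f = f1 ++ N :: f2 ∧ yY b (N :: f2) = N :: v ∧ yY b (f1 ++ [N]) = u ++ [N] := by
  induction f generalizing u with
  | nil => simp [yY] at h
  | cons a f ih =>
    cases f with
    | nil =>
      have hab : a ≠ b := by
        rintro rfl
        have : N ∈ yY a [a] := by rw [h]; simp
        simp [yY] at this
        exact hN this
      simp only [yY, hab, if_false] at h
      cases u with
      | nil =>
        simp at h
        obtain ⟨rfl, rfl⟩ := h
        exact ⟨[], [], by simp, by simp [yY, hN], by simp [yY, hN]⟩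
      | cons d u => simp at h
    | cons c r =>
      cases u with
      | nil =>
        have h0 := h
        simp only [yY, List.nil_append, List.cons.injEq] at h
        obtain ⟨rfl, h⟩ := h
        exact ⟨[], c :: r, rfl, by simpa using h0, by simp [yY, hN]⟩
      | cons d u =>
        simp only [yY, List.cons_append, List.cons.injEq] at h
        obtain ⟨rfl, h⟩ := h
        obtain ⟨u', hu, h'⟩ : ∃ u', u = insb b c a ++ u' ∧ yY b (c :: r) = u' ++ N :: v := by
          rcases insb_or b c a with hi | hi <;> rw [hi] at h ⊢
          · exact ⟨u, rfl, by simpa using h⟩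
          · cases u with
            | nil => simp at h; exact absurd h.1.symm hN
            | cons d u => simp at h; exact ⟨u, by simp [h.1], h.2⟩
        obtain ⟨f1, f2, e1, e2, e3⟩ := ih u' h'
        refine ⟨a :: f1, f2, by simp [e1], e2, ?_⟩
        cases f1 with
        | nil =>
          simp at e1
          obtain ⟨rfl, -⟩ := e1
          simp only [List.nil_append, List.cons_append] at e3 ⊢
          rw [yY, e3, hu]; simp
        | cons k f1 =>
          simp at e1
          obtain ⟨rfl, -⟩ := e1
          simp only [List.cons_append] at e3 ⊢
          rw [yY, e3, hu]; simp

/-- runs of `b` -/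
theorem xX_run (b x : A) (j : ℕ) (r : List A)
    (h : (b :: (List.replicate j b ++ [x])) <+: xX b (b :: r)) :
    (b :: (List.replicate j b ++ [x])) <+: b :: r := by
  induction j generalizing r with
  | zero =>
    cases r with
    | nil => simp [xX] at h
    | cons c r =>
      cases r with
      | nil => simpa [xX, insb] using h
      | cons d r => simpa [xX, insb] using h
  | succ j ih =>
    cases r with
    | nil => simp [xX] at h
    | cons c r =>
      simp only [xX, insb, List.replicate_succ, List.cons_append, ne_eq, not_true, false_and,
        lt_irrefl, or_self, if_false, List.nil_append, List.prefix_cons_inj] at h ⊢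
      have hc : c = b := by
        cases r with
        | nil => simp [xX] at h
        | cons d r => simp only [xX, List.cons_prefix_cons] at h; exact h.1.symm
      subst hc
      exact ih r h

theorem xX_head (b c : A) (r : List A) : ∃ s, xX b (c :: r) = c :: s := by
  cases r with
  | nil => exact ⟨_, rfl⟩
  | cons d r => exact ⟨_, rfl⟩

theorem xX_pull (b a x : A) (k : ℕ) (f : List A)
    (h : (a :: (List.replicate (k+1) b ++ [x])) <:+: xX b f) :
    (a :: (List.replicate k b ++ [x])) <:+: f := by
  induction f with
  | nil => simp [xX] at h
  | cons d f ih =>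
    cases f with
    | nil =>
      have := h.length_le
      simp [xX] at this
    | cons c r =>
      by_cases hd : d = b
      · subst hd
        rw [xX, List.infix_cons_iff] at h
        rcases h with h | h
        · obtain ⟨rfl, -⟩ := List.cons_prefix_cons.1 h
          have := xX_run a x (k+1) (c :: r) (by simpa [xX] using h)
          rw [List.replicate_succ, List.cons_append, List.cons_prefix_cons] at this
          exact List.infix_cons this.2.isInfix
        · simp [insb] at h
          exact List.infix_cons (ih (by simpa using h))
      · rw [xX, List.infix_cons_iff] at h
        rcases h with h | h
        · obtain ⟨rfl, h⟩ := List.cons_prefix_cons.1 h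
          apply List.IsPrefix.isInfix
          rw [List.cons_prefix_cons]
          refine ⟨rfl, ?_⟩
          obtain ⟨s, hs⟩ := xX_head b c r
          have hi : insb b a c = [b] := by
            rcases insb_or b a c with hi | hi
            · rw [hi, hs, List.replicate_succ] at h
              simp only [List.nil_append, List.cons_append, List.cons_prefix_cons] at h
              rw [← h.1] at hi
              simp [insb, hd] at hi
            · exact hi
          rw [hi, List.replicate_succ] at h
          simp only [List.nil_append, List.cons_append, List.cons_prefix_cons, true_and] at h
          cases k with
          | zero =>
            rw [hs] at h
            simp at h
            simp [h]
          | succ k =>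
            have hc : c = b := by
              rw [hs, List.replicate_succ] at h
              simp only [List.cons_append, List.cons_prefix_cons] at h
              exact h.1.symm
            subst hc
            exact xX_run c x k r h
        · rcases insb_or b d c with hi | hi <;> rw [hi] at h
          · exact List.infix_cons (ih h)
          · rw [List.cons_append, List.nil_append, List.infix_cons_iff] at h
            rcases h with h | h
            · obtain ⟨rfl, h⟩ := List.cons_prefix_cons.1 h
              obtain ⟨s, hs⟩ := xX_head a c r
              have hc : c = a := by
                rw [hs, List.replicate_succ] at h
                simp only [List.cons_append, List.cons_prefix_cons] at h
                exact h.1.symm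
              subst hc
              exact List.infix_cons (xX_run c x k r h).isInfix
            · exact List.infix_cons (ih h)

/-- two-letter factors -/
theorem xX_pull_two (b a x : A) (f : List A) (h : [a, x] <:+: xX b f) :
    ∃ a' x', [a', x'] <:+: f ∧
      ((a' = a ∧ x' = x ∧ (a < b ∧ b < x ∨ x < b ∧ b < a)) ∨
       (a' = a ∧ x = b ∧ (a < b ∧ x' ≤ b ∨ b < a ∧ b ≤ x')) ∨
       (x' = x ∧ a = b ∧ (x < b ∧ a' ≤ b ∨ b < x ∧ b ≤ a')) ∨
       (a = b ∧ x = b)) := by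
  induction f with
  | nil => simp [xX] at h
  | cons d f ih =>
    cases f with
    | nil =>
      have := h.length_le
      simp [xX] at this
    | cons c r =>
      obtain ⟨s, hs⟩ := xX_head b c r
      have hp : [d, c] <:+: d :: c :: r := ⟨[], r, by simp⟩
      rw [xX, List.infix_cons_iff] at h
      rcases h with h | h
      · obtain ⟨rfl, h⟩ := List.cons_prefix_cons.1 h
        refine ⟨a, c, hp, ?_⟩
        rw [hs] at h
        rcases insb_cases b a c with ⟨h1, hi⟩ | ⟨h1, h2, hi⟩ | ⟨h1, h2, hi⟩ | ⟨h1, h2, hi⟩ |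
          ⟨h1, h2, hi⟩ | ⟨h1, h2, hi⟩ | ⟨h1, h2, hi⟩ <;> rw [hi] at h <;> simp at h <;> subst h
        · rcases lt_trichotomy x b with h | h | h
          · exact Or.inr (Or.inr (Or.inl ⟨rfl, h1, Or.inl ⟨h, h1.le⟩⟩))
          · exact Or.inr (Or.inr (Or.inr ⟨h1, h⟩))
          · exact Or.inr (Or.inr (Or.inl ⟨rfl, h1, Or.inr ⟨h, h1.ge⟩⟩))
        · exact Or.inr (Or.inl ⟨rfl, rfl, Or.inl ⟨h1, h2.le⟩⟩)
        · exact Or.inr (Or.inl ⟨rfl, rfl, Or.inl ⟨h1, h2.le⟩⟩)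
        · exact Or.inl ⟨rfl, rfl, Or.inl ⟨h1, h2⟩⟩
        · exact Or.inl ⟨rfl, rfl, Or.inr ⟨h2, h1⟩⟩
        · exact Or.inr (Or.inl ⟨rfl, rfl, Or.inr ⟨h1, h2.ge⟩⟩)
        · exact Or.inr (Or.inl ⟨rfl, rfl, Or.inr ⟨h1, h2.le⟩⟩)
      · rcases insb_or b d c with hi | hi
        · rw [hi] at h
          obtain ⟨a', x', h1, h2⟩ := ih h
          exact ⟨a', x', List.infix_cons h1, h2⟩
        · rw [hi, List.cons_append, List.nil_append, List.infix_cons_iff] at h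
          rcases h with h | h
          · rw [hs] at h
            simp at h
            obtain ⟨rfl, rfl⟩ := h
            refine ⟨d, x, hp, ?_⟩
            rcases insb_cases a d x with ⟨h1, hi'⟩ | ⟨h1, h2, hi'⟩ | ⟨h1, h2, hi'⟩ | ⟨h1, h2, hi'⟩ |
              ⟨h1, h2, hi'⟩ | ⟨h1, h2, hi'⟩ | ⟨h1, h2, hi'⟩
            · simp [hi'] at hi
            · exact Or.inr (Or.inr (Or.inl ⟨rfl, rfl, Or.inl ⟨h2, h1.le⟩⟩))
            · exact Or.inr (Or.inr (Or.inr ⟨rfl, h2⟩))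
            · simp [hi'] at hi
            · simp [hi'] at hi
            · exact Or.inr (Or.inr (Or.inr ⟨rfl, h2⟩))
            · exact Or.inr (Or.inr (Or.inl ⟨rfl, rfl, Or.inr ⟨h2, h1.le⟩⟩))
          · obtain ⟨a', x', h1, h2⟩ := ih h
            exact ⟨a', x', List.infix_cons h1, h2⟩

theorem xX_glue (b c : A) (f s h : List A) (hf : xX b (f ++ [c]) = h ++ [c]) :
    xX b (f ++ c :: s) = h ++ xX b (c :: s) := by
  induction f generalizing h with
  | nil =>
    simp [xX] at hf
    simp [hf]
  | cons a f ih =>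
    cases f with
    | nil =>
      simp only [List.cons_append, List.nil_append, xX] at hf ⊢
      rw [← List.cons_append, List.append_left_inj] at hf
      rw [← hf]; simp
    | cons d f =>
      simp only [List.cons_append, xX] at hf ih ⊢
      obtain ⟨h', e1⟩ : ∃ h', xX b (d :: (f ++ [c])) = h' ++ [c] := by
        have : (xX b (d :: (f ++ [c]))).getLast? = some c := by
          have h1 := congrArg List.getLast? hf
          obtain ⟨s', hs'⟩ := xX_head b d (f ++ [c])
          rw [hs'] at h1 ⊢
          simpa [List.getLast?_append, List.getLast?_cons] using h1
        exact ⟨_, (List.dropLast_append_getLast? c this).symm⟩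
      rw [ih h' e1]
      rw [e1, ← List.append_assoc, ← List.cons_append, List.append_left_inj] at hf
      rw [← hf]; simp

theorem cxi_eq_aux (b a c : A) (r : List A) :
    xX b (a :: (r ++ [c])) = (((a :: r).zip (r ++ [c])).flatMap fun p =>
    if (p.1 ≠ b ∧ p.2 = b) ∨ (p.1 < b ∧ p.2 < b) ∨ (b < p.1 ∧ b < p.2) then [p.1, b]
    else [p.1]) ++ [c] := by
  induction r generalizing a with
  | nil => simp only [List.nil_append, xX, insb]; simp; split <;> simp
  | cons d r ih =>
    simp only [List.cons_append, xX, ih, insb, List.zip_cons_cons, List.flatMap_cons]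
    split <;> simp

theorem cxi_eq (b a : A) (r : List A) :
    xX b (a :: r ++ [a]) = cxi b (a :: r) ++ [a] := by
  simp only [cxi, List.rotate_cons_succ, List.rotate_zero]
  exact cxi_eq_aux b a a r

theorem cxi_pow (b a : A) (r : List A) (K : ℕ) :
    xX b ((List.replicate K (a :: r)).flatten ++ [a]) =
      (List.replicate K (cxi b (a :: r))).flatten ++ [a] := by
  induction K with
  | zero => simp [xX]
  | succ K ih =>
    obtain ⟨s, hs⟩ : ∃ s, (List.replicate K (a :: r)).flatten ++ [a] = a :: s := by
      cases K with
      | zero => exact ⟨[], by simp⟩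
      | succ K => simp [List.replicate_succ]
    rw [List.replicate_succ, List.flatten_cons, List.append_assoc, hs,
      xX_glue b a (a :: r) s _ (cxi_eq b a r), ← hs, ih]
    simp [List.replicate_succ]

theorem pow_infix_pow {a : A} {r : List A} (K : ℕ) :
    (List.replicate K (a :: r)).flatten ++ [a] <:+: (List.replicate (K+1) (a :: r)).flatten := by
  refine ⟨[], r, ?_⟩
  rw [List.replicate_succ', List.flatten_append]
  simp

theorem cxi_head (b a : A) (r : List A) : ∃ s, cxi b (a :: r) = a :: s := by
  have h := cxi_eq b a r
  obtain ⟨s, hs⟩ := xX_head b a (r ++ [a])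
  rw [List.cons_append, hs] at h
  cases h' : cxi b (a :: r) with
  | nil =>
    simp only [cxi, List.rotate_cons_succ, List.rotate_zero] at h'
    cases r <;> simp at h' <;> split_ifs at h' <;> simp at h'
  | cons d s => rw [h'] at h; simp at h; exact ⟨s, by rw [h.1]⟩

theorem Fac_nil {f : List A} (h : Fac [] f) : f = [] := by
  obtain ⟨K, h⟩ := h
  simpa using h

theorem Fac_cons {w f : List A} (hw : w ≠ []) (h : Fac w f) : ∃ a, Fac w (a :: f) := by
  obtain ⟨K, s, t, h⟩ := h
  obtain ⟨w', e, rfl⟩ : ∃ w' e, w = w' ++ [e] := ⟨_, _, (List.dropLast_append_getLast hw).symm⟩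
  rcases List.eq_nil_or_concat s with rfl | ⟨s', d, rfl⟩
  · refine ⟨e, K+1, w', t, ?_⟩
    rw [List.replicate_succ, List.flatten_cons, ← h]; simp
  · exact ⟨d, K, s', t, by rw [← h]; simp⟩

theorem Fac_xX {b : A} {w f : List A} (h : Fac w f) : Fac (cxi b w) (xX b f) := by
  cases w with
  | nil => rw [Fac_nil h]; exact ⟨0, by simp [xX]⟩
  | cons a r =>
    obtain ⟨K, h⟩ := h
    have h1 := xX_infix_mono b (h.trans (List.prefix_append _ [a]).isInfix)
    rw [cxi_pow] at h1
    obtain ⟨s, hs⟩ := cxi_head b a r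
    rw [hs] at h1
    exact ⟨K+1, by rw [hs]; exact h1.trans (pow_infix_pow K)⟩

theorem Fac_yY {b : A} {w f : List A} (h : Fac w f) : Fac (cxi b w) (yY b f) := by
  cases w with
  | nil => rw [Fac_nil h]; exact ⟨0, by simp [yY]⟩
  | cons a r =>
    obtain ⟨d, hd⟩ := Fac_cons (by simp) h
    exact (Fac_xX hd).sub (yY_suffix_xX b d f).isInfix

theorem Fac_cxi {b : A} {w h : List A} (hh : Fac (cxi b w) h) : ∃ f, Fac w f ∧ h <:+: xX b f := by
  cases w with
  | nil => rw [Fac_nil (f := h) (by simpa [cxi] using hh)]; exact ⟨[], ⟨0, by simp⟩, by simp⟩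
  | cons a r =>
    obtain ⟨K, hh⟩ := hh
    refine ⟨_, ⟨K+1, pow_infix_pow K⟩, ?_⟩
    rw [cxi_pow]
    exact hh.trans (List.prefix_append _ [a]).isInfix

theorem DD_two (b : A) {a c x y : A} (h1 : a < c) (h2 : x < y) : DD (yY b [a, x]) (yY b [c, y]) := by
  simp only [yY]
  have key : ∀ (m p s q t : List A) (a c x y : A), a < c → x < y →
      DD (p ++ a :: (m ++ [x]) ++ s) (q ++ c :: (m ++ [y]) ++ t) :=
    fun m p s q t a c x y h1 h2 =>
      ⟨m, a, c, x, y, h1, h2, ⟨p, s, rfl⟩, ⟨q, t, rfl⟩⟩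
  unfold insb
  split_ifs <;> simp only [List.nil_append, List.cons_append] <;>
  first
  | (exfalso; grind)
  | exact key [] [] _ [] _ _ _ _ _ (by grind) (by grind)
  | exact key [] [_] _ [] _ _ _ _ _ (by grind) (by grind)
  | exact key [] [] _ [_] _ _ _ _ _ (by grind) (by grind)
  | exact key [] [_] _ [_] _ _ _ _ _ (by grind) (by grind)
  | exact key [_] [] _ [] _ _ _ _ _ (by grind) (by grind)
  | exact key [_] [_] _ [] _ _ _ _ _ (by grind) (by grind)
  | exact key [_] [] _ [_] _ _ _ _ _ (by grind) (by grind)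
  | exact key [] [_] _ [_, _] _ _ _ _ _ (by grind) (by grind)
  | exact key [] [_, _] _ [_] _ _ _ _ _ (by grind) (by grind)
  | skip
  · rcases lt_or_ge b y with h | h
    · exact key [] [] _ [] _ _ _ _ _ h1 h
    · exact key [] [_] _ [] _ _ _ _ _ (by grind) h2
  · rcases lt_or_ge b x with h | h
    · exact key [] [] _ [_] _ _ _ _ _ (by grind) h2
    · exact key [] [] _ [] _ _ _ _ _ h1 (by grind)

theorem NS_forward (b : A) (w : List A) (h : NS w) : NS (cxi b w) := by
  obtain ⟨f, g, hf, hg, m, a, c, x, y, h1, h2, h3, h4⟩ := h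
  have hf' := Fac_yY (b := b) (hf.sub h3)
  have hg' := Fac_yY (b := b) (hg.sub (List.reverse_infix.2 h4))
  rw [yY_reverse] at hg'
  refine ⟨_, _, hf', hg', ?_⟩
  cases m with
  | nil => exact DD_two b h1 h2
  | cons d m =>
    obtain ⟨m', e, he⟩ : ∃ m' e, d :: m = m' ++ [e] :=
      ⟨_, _, (List.dropLast_append_getLast (by simp)).symm⟩
    have key : ∀ a x : A, yY b (a :: (d :: m ++ [x])) =
        (insb b d a ++ [a]).reverse ++ yY b (d :: m) ++ (insb b e x ++ [x]) := by
      intro a x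
      rw [List.cons_append, yY, he]
      have := yY_snoc b m' e x
      have e' : d :: (m ++ [x]) = m' ++ [e, x] := by rw [← List.cons_append, he]; simp
      rw [e', this]
      simp [insb_rev]
    rw [key, key]
    exact DD_mk _ (insb_lt b d h1) (insb_lt b e h2)

theorem NS_backward (b : A) (w : List A) (h : NS (cxi b w)) : NS w := by
  obtain ⟨f, g, hf, hg, m, a, c, x, y, h1, h2, h3, h4⟩ := h
  obtain ⟨f, hf, h3⟩ := Fac_cxi (hf.sub h3)
  obtain ⟨g, hg, h4⟩ := Fac_cxi (hg.sub (List.reverse_infix.2 h4))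
  by_cases hm : ∃ N ∈ m, N ≠ b
  · obtain ⟨N, hNm, hN⟩ := hm
    obtain ⟨m1, m2, rfl⟩ := List.append_of_mem hNm
    have h3' := h3.trans (xX_suffix_yY b f).isInfix
    have h4' := h4.trans (xX_suffix_yY b g).isInfix
    rw [← List.reverse_reverse g, yY_reverse, List.reverse_infix] at h4'
    obtain ⟨s, t, h3'⟩ := h3'
    obtain ⟨s', t', h4'⟩ := h4'
    obtain ⟨f1, f2, e1, e2, e3⟩ := yY_split hN f (s ++ a :: m1) (m2 ++ x :: t)
      (by rw [← h3']; simp)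
    obtain ⟨g1, g2, e4, e5, e6⟩ := yY_split hN g.reverse (s' ++ c :: m1) (m2 ++ y :: t')
      (by rw [← h4']; simp)
    have e3' := congrArg List.reverse e3
    have e6' := congrArg List.reverse e6
    rw [← yY_reverse] at e3' e6'
    simp only [List.reverse_append, List.reverse_cons, List.reverse_nil, List.nil_append,
      List.cons_append, List.append_assoc] at e3' e6'
    refine ⟨f, g.reverse, hf, by simpa using hg, ?_⟩
    have l1 : LL f2 g2 := yY_mono_inv hN e2 e5 ⟨m2, t, t', x, y, h2, rfl, rfl⟩
    have l2 : LL f1.reverse g1.reverse := yY_mono_inv hN e3' e6'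
      ⟨m1.reverse, s.reverse, s'.reverse, a, c, h1, by simp, by simp⟩
    have := DD_mk [N] l2 l1
    rw [e1, e4]
    simpa using this
  · push Not at hm
    have hm' := List.eq_replicate_of_mem hm
    generalize m.length = k at hm'
    subst hm'
    cases k with
    | succ k =>
      have h3' := xX_pull b a x k f h3
      have h4' := xX_pull b y c k g (by simpa using h4)
      refine ⟨_, (y :: (List.replicate k b ++ [c])).reverse, hf.sub h3',
        by rw [List.reverse_reverse]; exact hg.sub h4', List.replicate k b, a, c, x, y, h1, h2,
        List.infix_refl _, by simp⟩
    | zero =>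
      obtain ⟨a', x', i1, i2⟩ := xX_pull_two b a x f (by simpa using h3)
      obtain ⟨y', c', j1, j2⟩ := xX_pull_two b y c g (by simpa using h4)
      have : a' < c' ∧ x' < y' := by clear h3 h4 hf hg hm i1 j1; grind
      exact ⟨_, [y', c'].reverse, hf.sub i1, by rw [List.reverse_reverse]; exact hg.sub j1,
        [], a', c', x', y', this.1, this.2, by simp, by simp⟩

theorem wlt_iff {u v : List A} (h : u.length = v.length) : wlt u v ↔ LL u v := by
  constructor
  · rintro (⟨h1, h2⟩ | h)
    · exact absurd (h2.eq_of_length h.symm) h1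
    · exact h
  · exact Or.inr

theorem LL_of_ne {u v : List A} (h : u.length = v.length) (hne : u ≠ v) : LL u v ∨ LL v u := by
  rcases LL_tri u v with h' | h' | h' | h'
  · exact Or.inl h'
  · exact Or.inr h'
  · exact absurd (h'.eq_of_length h) hne
  · exact absurd (h'.eq_of_length h.symm).symm hne

theorem Fac_rot {w u v : List A} (h : isRot w (u ++ v)) : Fac w (u ++ v) ∧ Fac w (v ++ u) := by
  obtain ⟨s, t, h1, h2⟩ := h
  have h3 : Fac w ((u ++ v) ++ (u ++ v)) := by
    refine ⟨3, s, t, ?_⟩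
    rw [h2, h1]
    simp [List.replicate_succ]
  exact ⟨h3.sub (List.prefix_append _ _).isInfix, h3.sub ⟨u, v, by simp⟩⟩

theorem NS_of_not_singular {w : List A} (h : ¬ cyclicSingular w) : NS w := by
  unfold cyclicSingular at h
  push Not at h
  obtain ⟨u, v, -, -, hr, hu, hv, h⟩ := h
  rw [wlt_iff (by simp), wlt_iff (by simp)] at h
  obtain ⟨f1, f2⟩ := Fac_rot hr
  rcases h with ⟨h1, h2⟩ | ⟨h1, h2⟩
  · have h3 := (LL_of_ne (by simp) hv).resolve_left h2
    exact ⟨v ++ u, v.reverse ++ u.reverse, f2, by simpa using f1, by simpa using DD_mk [] h3 h1⟩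
  · have h3 := (LL_of_ne (by simp) hu).resolve_left h1
    exact ⟨u ++ v, u.reverse ++ v.reverse, f1, by simpa using f2, by simpa using DD_mk [] h3 h2⟩

theorem pow_getElem {w : List A} (K i : ℕ) (h : i < K * w.length) :
    (List.replicate K w).flatten[i]? = w[i % w.length]? := by
  induction K generalizing i with
  | zero => simp at h
  | succ K ih =>
    rw [List.replicate_succ, List.flatten_cons, List.getElem?_append]
    split
    · rename_i h'; rw [Nat.mod_eq_of_lt h']
    · rename_i h'
      push Not at h'
      rw [ih _ (by rw [Nat.succ_mul] at h; omega), ← Nat.mod_eq_sub_mod h']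

theorem Fac_idx {w f : List A} (W : ℕ → A) (hW : ∀ i, w[i % w.length]? = some (W i))
    (h : Fac w f) : ∃ i, ∀ k < f.length, f[k]? = some (W (i + k)) := by
  obtain ⟨K, s, t, h⟩ := h
  refine ⟨s.length, fun k hk => ?_⟩
  have hlen := congrArg List.length h
  simp only [List.length_append, List.length_flatten, List.map_replicate, List.sum_replicate,
    smul_eq_mul] at hlen
  rw [← hW, ← pow_getElem K _ (by omega), ← h, List.getElem?_append_left (by simp; omega),
    List.getElem?_append_right (by omega)]
  simp

theorem LL_of_idx {f g : List A} (l : ℕ) {x y : A} (h : ∀ t < l, f[t]? = g[t]?)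
    (hx : f[l]? = some x) (hy : g[l]? = some y) (hxy : x < y) : LL f g := by
  induction l generalizing f g with
  | zero =>
    cases f <;> cases g <;> simp at hx hy
    subst hx hy
    exact LL_cons.2 (Or.inl hxy)
  | succ l ih =>
    have h0 := h 0 (by omega)
    cases f with
    | nil => simp at hx
    | cons a f =>
      cases g with
      | nil => simp at hy
      | cons c g =>
        simp at h0 hx hy
        exact LL_cons.2 (Or.inr ⟨h0, ih (fun t ht => by simpa using h (t+1) (by omega)) hx hy⟩)

theorem disjoint_aux (W : ℕ → A) (n : ℕ) (hn : 0 < n) (hW : ∀ i j, i ≡ j [MOD n] → W i = W j)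
    (i k l : ℕ) (hl : 0 < l) (h1 : W i < W (k + l)) (h2 : W (i + l) < W k)
    (h3 : ∀ t, 0 < t → t < l → W (i + t) = W (k + l - t)) :
    ∃ k', i + l < k' ∧ k' + l < i + n ∧ W i < W (k' + l) ∧ W (i + l) < W k' ∧
      ∀ t, 0 < t → t < l → W (i + t) = W (k' + l - t) := by
  have hp : ∀ j, W (j + n) = W j := fun j => hW _ _ (by simp [Nat.ModEq])
  obtain ⟨k', e1, e2, e3⟩ : ∃ k', i + l ≤ k' ∧ k' < i + l + n ∧ k' ≡ k [MOD n] := by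
    refine ⟨i + l + (k + (i + l) * n - (i + l)) % n, by omega,
      by have := Nat.mod_lt (k + (i + l) * n - (i + l)) hn; omega, ?_⟩
    have hge : i + l ≤ (i + l) * n := Nat.le_mul_of_pos_right _ hn
    calc i + l + (k + (i + l) * n - (i + l)) % n
        ≡ i + l + (k + (i + l) * n - (i + l)) [MOD n] := Nat.ModEq.add_left _ (Nat.mod_modEq _ _)
      _ = k + (i + l) * n := by omega
      _ ≡ k [MOD n] := by simp [Nat.ModEq]
  have q1 : W (k' + l) = W (k + l) := hW _ _ (e3.add_right l)
  have q2 : W k' = W k := hW _ _ e3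
  rw [← q1] at h1
  rw [← q2] at h2
  have h3' : ∀ t, 0 < t → t < l → W (i + t) = W (k' + l - t) := by
    intro t ht ht'
    rw [h3 t ht ht', Nat.add_sub_assoc ht'.le, Nat.add_sub_assoc ht'.le]
    exact (hW _ _ (e3.add_right _)).symm
  have c0 : k' ≠ i + l := by
    rintro rfl; exact lt_irrefl _ h2
  have c1 : k' < i + n := by
    by_contra hc
    push Not at hc
    obtain ⟨s, hs⟩ := Nat.exists_eq_add_of_le hc
    have hk : W k' = W (i + s) := by rw [hs, ← hp (i + s)]; congr 1; omega
    rcases Nat.eq_zero_or_pos s with h0 | h0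
    · subst h0
      have : W (k' + l) = W (i + l) := by rw [hs, ← hp (i + l)]; congr 1; omega
      rw [this] at h1
      rw [hk, add_zero] at h2
      exact lt_asymm h1 h2
    · have := h3' s h0 (by omega)
      rw [← hk, show k' + l - s = i + l + n by omega, hp] at this
      rw [this] at h2
      exact lt_irrefl _ h2
  refine ⟨k', by omega, ?_, h1, h2, h3'⟩
  by_contra hc
  push Not at hc
  obtain ⟨t, ht⟩ := Nat.exists_eq_add_of_le hc
  have hk : W (k' + l) = W (i + t) := by rw [ht, ← hp (i + t)]; congr 1; omega
  rcases Nat.eq_zero_or_pos t with h0 | h0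
  · subst h0
    rw [hk] at h1
    exact lt_irrefl _ h1
  · have := h3' t h0 (by omega)
    rw [← hk, show k' + l - t = i + n by omega, hp] at this
    rw [this] at h1
    exact lt_irrefl _ h1

theorem not_singular_of_NS {w : List A} (h : NS w) : ¬ cyclicSingular w := by
  intro hs
  obtain ⟨f, g, hf, hg, m, a, c, x, y, h1, h2, h3, h4⟩ := h
  replace hf := hf.sub h3
  replace hg := hg.sub (List.reverse_infix.2 h4)
  have hw : w ≠ [] := by
    rintro rfl
    have := Fac_nil hf
    simp at this
  have hn : 0 < w.length := List.length_pos_iff.2 hw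
  obtain ⟨W, hW⟩ : ∃ W : ℕ → A, ∀ i, w[i % w.length]? = some (W i) :=
    ⟨fun i => w[i % w.length]'(Nat.mod_lt _ hn), fun i => by simp⟩
  have hmod : ∀ i j, i ≡ j [MOD w.length] → W i = W j := by
    intro i j h
    have := hW i
    rw [h, hW j] at this
    simpa using this.symm
  obtain ⟨i, hi⟩ := Fac_idx W hW hf
  obtain ⟨k, hk⟩ := Fac_idx W hW hg
  simp only [List.length_cons, List.length_append, List.length_reverse, List.length_nil] at hi hk
  have a1 : W i = a := by simpa using (hi 0 (by omega)).symm
  have a2 : W (i + (m.length + 1)) = x := by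
    have := hi (m.length + 1) (by omega)
    simpa using this.symm
  have a3 : ∀ t < m.length, m[t]? = some (W (i + (t + 1))) := by
    intro t ht
    have := hi (t + 1) (by omega)
    rw [List.getElem?_cons_succ, List.getElem?_append_left ht] at this
    exact this
  have b1 : W k = y := by
    have := hk 0 (by omega)
    simpa using this.symm
  have b2 : W (k + (m.length + 1)) = c := by
    have := hk (m.length + 1) (by omega)
    rw [List.getElem?_reverse (by simp)] at this
    simpa using this.symm
  have b3 : ∀ t < m.length, m[t]? = some (W (k + (m.length - t))) := by
    intro t ht
    have := hk (m.length - t) (by omega)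
    rw [List.getElem?_reverse (by simp; omega)] at this
    simp only [List.length_cons, List.length_append, List.length_nil] at this
    rw [show m.length + (0 + 1) + 1 - 1 - (m.length - t) = t + 1 by omega,
      List.getElem?_cons_succ, List.getElem?_append_left ht] at this
    exact this
  obtain ⟨k', d1, d2, d3, d4, d5⟩ := disjoint_aux W w.length hn hmod i k (m.length + 1) (by omega)
    (by rw [a1, b2]; exact h1) (by rw [a2, b1]; exact h2) (by
      intro t ht ht'
      have e1 := a3 (t - 1) (by omega)
      rw [b3 (t - 1) (by omega)] at e1
      rw [show t - 1 + 1 = t by omega,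
        show k + (m.length - (t - 1)) = k + (m.length + 1) - t by omega] at e1
      simpa using e1.symm)
  generalize hl : m.length + 1 = l at *
  have hl0 : 0 < l := by omega
  set u := (List.range (k' + l - i - 1)).map (fun t => W (i + 1 + t)) with hu
  set v := (List.range (i + w.length + 1 - (k' + l))).map (fun t => W (k' + l + t)) with hv
  have lu : u.length = k' + l - i - 1 := by simp [hu]
  have lv : v.length = i + w.length + 1 - (k' + l) := by simp [hv]
  have gu : ∀ t < u.length, u[t]? = some (W (i + 1 + t)) := by
    intro t ht; rw [lu] at ht; simp [hu, ht]
  have gv : ∀ t < v.length, v[t]? = some (W (k' + l + t)) := by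
    intro t ht; rw [lv] at ht; simp [hv, ht]
  have huv : u ++ v = w.rotate (i + 1) := by
    apply List.ext_getElem?
    intro t
    by_cases ht : t < w.length
    · have e : (w.rotate (i + 1))[t]? = some (W (i + 1 + t)) := by
        rw [List.getElem?_rotate ht, ← hW, Nat.add_comm t]
      rw [e, List.getElem?_append]
      split
      · rename_i h'; exact gu t h'
      · rename_i h'
        rw [gv _ (by omega)]
        congr 2; omega
    · rw [List.getElem?_eq_none (by rw [List.length_append]; omega),
        List.getElem?_eq_none (by rw [List.length_rotate]; omega)]
  have hrot : isRot w (u ++ v) := by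
    rw [huv, List.rotate_eq_drop_append_take_mod]
    exact ⟨_, _, (List.take_append_drop ((i + 1) % w.length) w).symm, rfl⟩
  have gur : ∀ t < u.length, u.reverse[t]? = some (W (k' + l - 1 - t)) := by
    intro t ht
    rw [List.getElem?_reverse ht, gu _ (by omega)]
    congr 2; omega
  have Lu : LL u u.reverse := by
    refine LL_of_idx (l - 1) ?_ (gu _ (by omega)) (gur _ (by omega)) ?_
    · intro t ht
      rw [gu _ (by omega), gur _ (by omega)]
      have := d5 (t + 1) (by omega) (by omega)
      rw [show i + 1 + t = i + (t + 1) by omega, this]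
      congr 2; omega
    · rw [show i + 1 + (l - 1) = i + l by omega, show k' + l - 1 - (l - 1) = k' by omega]
      exact d4
  have Lv : LL v.reverse v := by
    refine LL_of_idx 0 (by simp) (x := W (i + w.length)) ?_ (gv 0 (by omega)) ?_
    · rw [List.getElem?_reverse (by omega), gv _ (by omega)]
      congr 2; omega
    · rw [hmod (i + w.length) i (by simp [Nat.ModEq])]
      exact d3
  have key := hs u v (by rintro h; rw [h] at lu; simp at lu; omega)
    (by rintro h; rw [h] at lv; simp at lv; omega) hrot
    (fun h => by rw [← h] at Lu; exact LL_irrefl Lu)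
    (fun h => by rw [← h] at Lv; exact LL_irrefl Lv)
  rw [wlt_iff (by simp), wlt_iff (by simp)] at key
  exact LL_asymm Lv (key.1 Lu)

theorem singular_iff (w : List A) : cyclicSingular w ↔ ¬ NS w :=
  ⟨fun h h' => not_singular_of_NS h' h, fun h => by
    by_contra h'
    exact h (NS_of_not_singular h')⟩

end helpers

theorem stmt17 {A : Type*} [LinearOrder A] [Fintype A] (b : A) (w : List A)
    (hδ : deltaW w b ≠ 0) :
    cyclicSingular w ↔ cyclicSingular (cxi b w) := by
  rw [singular_iff, singular_iff]
  exact not_congr ⟨NS_forward b w, NS_backward b w⟩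
end

section
/- Let A be a finite ordered alphabet with largest letter j, and x a nonempty word over A \ {j}. Then the cyclic word represented by xj is singular if and only if for every factorization x = u* v w (u, v, w possibly empty) with v ≠ v* and u ≠ w, one has v ≺ v* if and only if w ≺ u. -/
theorem wlt_nil_right {A : Type*} [LinearOrder A] (a : A) (u : List A) : wlt (a :: u) [] :=
  Or.inl ⟨by simp, by simp⟩

theorem not_wlt_nil {A : Type*} [LinearOrder A] (v : List A) : ¬ wlt [] v := by
  rintro (⟨h, h'⟩ | ⟨p, s, t, x, y, _, h, _⟩)
  · exact h (by simpa using h')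
  · simp at h

theorem wlt_cons {A : Type*} [LinearOrder A] (a b : A) (u v : List A) :
    wlt (a :: u) (b :: v) ↔ a < b ∨ (a = b ∧ wlt u v) := by
  constructor
  · rintro (⟨h, h'⟩ | ⟨p, s, t, x, y, hxy, h1, h2⟩)
    · rw [List.cons_prefix_cons] at h'
      obtain ⟨rfl, h'⟩ := h'
      exact Or.inr ⟨rfl, Or.inl ⟨fun e => h (by rw [e]), h'⟩⟩
    · cases p with
      | nil =>
        simp only [List.nil_append, List.cons.injEq] at h1 h2
        left; rw [h1.1, h2.1]; exact hxy
      | cons c p =>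
        simp only [List.cons_append, List.cons.injEq] at h1 h2
        exact Or.inr ⟨h1.1.trans h2.1.symm, Or.inr ⟨p, s, t, x, y, hxy, h1.2, h2.2⟩⟩
  · rintro (h | ⟨rfl, (⟨h, h'⟩ | ⟨p, s, t, x, y, hxy, rfl, rfl⟩)⟩)
    · exact Or.inr ⟨[], u, v, a, b, h, rfl, rfl⟩
    · exact Or.inl ⟨by simpa using h, by simpa using h'⟩
    · exact Or.inr ⟨a :: p, s, t, x, y, hxy, rfl, rfl⟩

theorem wlt_key {A : Type*} [LinearOrder A] (j : A) (a b : List A) (w : List A) :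
    ∀ u : List A, (∀ c ∈ w, c < j) → (∀ c ∈ u, c < j) → u ≠ w →
      (w ++ j :: a ≠ u ++ j :: b ∧ (wlt (w ++ j :: a) (u ++ j :: b) ↔ wlt w u)) := by
  induction w with
  | nil =>
    intro u _ hu hne
    cases u with
    | nil => exact absurd rfl hne
    | cons c u =>
      have hc : c < j := hu c (by simp)
      refine ⟨?_, ?_⟩
      · intro h
        simp only [List.nil_append, List.cons_append, List.cons.injEq] at h
        exact hc.ne' h.1
      · simp only [List.nil_append, List.cons_append, wlt_cons]
        simp [not_wlt_nil, hc.ne', hc.le]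
  | cons d w ih =>
    intro u hw hu hne
    have hd : d < j := hw d (by simp)
    cases u with
    | nil =>
      refine ⟨?_, ?_⟩
      · intro h
        simp only [List.nil_append, List.cons_append, List.cons.injEq] at h
        exact hd.ne h.1
      · simp only [List.nil_append, List.cons_append, wlt_cons]
        simp [wlt_nil_right, hd]
    | cons c u =>
      simp only [List.cons_append, wlt_cons]
      by_cases hdc : d = c
      · subst hdc
        have := ih u (fun c hc => hw c (by simp [hc])) (fun c hc => hu c (by simp [hc]))
          (fun e => hne (by rw [e]))
        simpa using this
      · simp [hdc]

theorem wlt_main {A : Type*} [LinearOrder A] (j : A) (u w : List A)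
    (hw : ∀ c ∈ w, c < j) (hu : ∀ c ∈ u, c < j) (hne : u ≠ w) :
    w ++ j :: u.reverse ≠ (w ++ j :: u.reverse).reverse ∧
      (wlt (w ++ j :: u.reverse) (w ++ j :: u.reverse).reverse ↔ wlt w u) := by
  have := wlt_key j u.reverse w.reverse w u hw hu hne
  simpa using this

theorem stmt18 {A : Type*} [LinearOrder A] (j : A) (x : List A)
    (hx : x ≠ []) (hlt : ∀ c ∈ x, c < j) :
    cyclicSingular (x ++ [j]) ↔
      ∀ u v w : List A, x = u.reverse ++ v ++ w → v ≠ v.reverse → u ≠ w →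
        (wlt v v.reverse ↔ wlt w u) := by
  constructor
  · intro H u v w hxe hv hne
    have hm := wlt_main j u w (fun c hc => hlt c (by simp [hxe, hc]))
      (fun c hc => hlt c (by simp [hxe, hc])) hne
    rw [← hm.2]
    refine H v (w ++ j :: u.reverse) ?_ (by simp) ⟨u.reverse, v ++ w ++ [j], ?_, ?_⟩ hv hm.1
    · rintro rfl; simp at hv
    · simp [hxe]
    · simp
  · intro H U V hU hV hrot hUp hVp
    have key : ∀ u v w : List A, x = u.reverse ++ v ++ w → v ≠ v.reverse →
        w ++ j :: u.reverse ≠ (w ++ j :: u.reverse).reverse →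
        (wlt v v.reverse ↔ wlt (w ++ j :: u.reverse) (w ++ j :: u.reverse).reverse) := by
      intro u v w hxe hv hp
      have hne : u ≠ w := by rintro rfl; simp at hp
      have hm := wlt_main j u w (fun c hc => hlt c (by simp [hxe, hc]))
        (fun c hc => hlt c (by simp [hxe, hc])) hne
      rw [hm.2]
      exact H u v w hxe hv hne
    obtain ⟨s, t, hst, hxe⟩ : ∃ s t, U ++ V = t ++ j :: s ∧ x = s ++ t := by
      obtain ⟨s, t, h1, h2⟩ := hrot
      rcases List.eq_nil_or_concat t with rfl | ⟨t', c, rfl⟩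
      · exact ⟨[], x, by rw [h1]; simpa using h2, by simp⟩
      · have h1' : x ++ [j] = (s ++ t') ++ [c] := by simpa using h1
        obtain ⟨e1, e2⟩ := List.append_inj' h1' rfl
        have e3 : j = c := by simpa using e2
        subst e3
        exact ⟨s, t', by simpa using h2, e1⟩
    rcases List.append_eq_append_iff.mp hst with ⟨b, hb1, hb2⟩ | ⟨b, hb1, hb2⟩
    · have := key s.reverse U b (by simp [hxe, hb1]) hUp
      rw [List.reverse_reverse, ← hb2] at this
      exact this hVp
    · cases b with
      | nil =>
        simp only [List.nil_append, List.append_nil] at hb1 hb2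
        have := key s.reverse U [] (by simp [hxe, hb1]) hUp
        rw [List.reverse_reverse, List.nil_append, hb2] at this
        exact this hVp
      | cons c b =>
        simp only [List.cons_append, List.cons.injEq] at hb2
        obtain ⟨rfl, hb2⟩ := hb2
        have := key b.reverse V t (by simp [hxe, hb2]) hVp
        rw [List.reverse_reverse, ← hb1] at this
        exact (this hUp).symm
end
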